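/- Let V be a 24-dimensional real inner product space, Υ a lattice in V such that √2·Υ is even and unimodular, and M, N a polarization of Υ in which M and N are both even unimodular lattices (Niemeier lattices). Then: (iii) if √2·Υ has minimum norm 4 (i.e. 2⟪v,v⟫ ≥ 4 for all nonzero v ∈ Υ) and μ(M) = 4, then μ(L(M,N,3)) ≥ 6; and (iv) if in addition μ(N) = 2, then μ(L(M,N,3)) = 6. -/

import Mathlib

noncomputable section

open scoped RealInnerProductSpace Pointwise
open Module

variable {V : Type*} [NormedAddCommGroup V] [InnerProductSpace ℝ V]

/-- `L` is a (full) lattice in `V`: a finitely generated `ℤ`-submodule spanning `V` over `ℝ`. -/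
def IsLat (L : Submodule ℤ V) : Prop :=
  L.FG ∧ Submodule.span ℝ (L : Set V) = ⊤

/-- The lattice `L` is integral: all inner products of lattice vectors are integers. -/
def IsIntegralLat (L : Submodule ℤ V) : Prop :=
  ∀ x ∈ L, ∀ y ∈ L, ∃ n : ℤ, ⟪x, y⟫ = (n : ℝ)

/-- The lattice `L` is even: it is integral and all norms are even integers. -/
def IsEvenLat (L : Submodule ℤ V) : Prop :=
  IsIntegralLat L ∧ ∀ x ∈ L, ∃ n : ℤ, ⟪x, x⟫ = 2 * (n : ℝ)

/-- The lattice `L` is unimodular: the Gram matrix of some `ℤ`-basis has determinant 1. -/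
def IsUnimodularLat (L : Submodule ℤ V) : Prop :=
  ∃ (n : ℕ) (b : Basis (Fin n) ℤ L),
    (Matrix.of fun i j : Fin n => ⟪(b i : V), (b j : V)⟫).det = 1

/-- The minimum norm `μ(L)` of a lattice. -/
def minNorm (L : Submodule ℤ V) : ℝ :=
  sInf {r : ℝ | ∃ x ∈ L, x ≠ 0 ∧ ⟪x, x⟫ = r}

/-- `√2·Υ` is an even unimodular lattice: all norms of `Υ` are integers, all doubled inner
products are integers, and the Gram matrix of the form `2⟪·,·⟫` on a `ℤ`-basis of `Υ` has
determinant 1. -/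
def SqrtTwoEvenUnimod (Υ : Submodule ℤ V) : Prop :=
  (∀ x ∈ Υ, ∃ n : ℤ, ⟪x, x⟫ = (n : ℝ)) ∧
  (∀ x ∈ Υ, ∀ y ∈ Υ, ∃ n : ℤ, 2 * ⟪x, y⟫ = (n : ℝ)) ∧
  ∃ (n : ℕ) (b : Basis (Fin n) ℤ Υ),
    (Matrix.of fun i j : Fin n => 2 * ⟪(b i : V), (b j : V)⟫).det = 1

/-- `M, N` is a polarization of `Υ`: a pair of integral sublattices with
`M + N = Υ` and `M ∩ N = 2Υ`. -/
def IsPolarization (Υ M N : Submodule ℤ V) : Prop :=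
  M ≤ Υ ∧ N ≤ Υ ∧ IsIntegralLat M ∧ IsIntegralLat N ∧ M ⊔ N = Υ ∧ M ⊓ N = (2 : ℤ) • Υ

/-- The sublattice `L_M = {(x_1,…,x_k) ∈ M^k : x_1+⋯+x_k ∈ M ∩ N}` of `V^k`. -/
def LsubM (M N : Submodule ℤ V) (k : ℕ) : Submodule ℤ (PiLp 2 fun _ : Fin k => V) where
  carrier := {v | (∀ i, v i ∈ M) ∧ (∑ i, v i) ∈ M ⊓ N}
  add_mem' := fun {a b} ha hb =>
    ⟨fun i => M.add_mem (ha.1 i) (hb.1 i), by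
      have h : (∑ i, (a + b) i) = (∑ i, a i) + ∑ i, b i :=
        (Finset.sum_congr rfl fun i _ => rfl).trans Finset.sum_add_distrib
      rw [h]; exact (M ⊓ N).add_mem ha.2 hb.2⟩
  zero_mem' := ⟨fun _ => M.zero_mem, by
      have h : (∑ i : Fin k, (0 : PiLp 2 fun _ : Fin k => V) i) = 0 :=
        Finset.sum_eq_zero fun _ _ => rfl
      rw [h]; exact (M ⊓ N).zero_mem⟩
  smul_mem' := fun c a ha =>
    ⟨fun i => M.smul_mem c (ha.1 i), by
      have h : (∑ i, (c • a) i) = c • ∑ i, a i := by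
        show (∑ i, c • a i) = c • ∑ i, a i
        exact Finset.smul_sum.symm
      rw [h]; exact (M ⊓ N).smul_mem c ha.2⟩

/-- The diagonal sublattice `L^N = {(y,…,y) : y ∈ N}` of `V^k`. -/
def LsupN (N : Submodule ℤ V) (k : ℕ) : Submodule ℤ (PiLp 2 fun _ : Fin k => V) where
  carrier := {v | ∃ y ∈ N, ∀ i, v i = y}
  add_mem' := fun {a b} ha hb => by
    obtain ⟨ya, hya, ha⟩ := ha
    obtain ⟨yb, hyb, hb⟩ := hb
    exact ⟨ya + yb, N.add_mem hya hyb, fun i => by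
      show a i + b i = ya + yb
      rw [ha i, hb i]⟩
  zero_mem' := ⟨0, N.zero_mem, fun _ => rfl⟩
  smul_mem' := fun c a ha => by
    obtain ⟨y, hy, h⟩ := ha
    exact ⟨c • y, N.smul_mem c hy, fun i => by
      show c • a i = c • y
      rw [h i]⟩

/-- The lattice `L(M,N,k) = L_M + L^N ⊆ V^k`. -/
def LMN (M N : Submodule ℤ V) (k : ℕ) : Submodule ℤ (PiLp 2 fun _ : Fin k => V) :=
  LsubM M N k ⊔ LsupN N k

/-- The Leech polarization setup: `V` is 24-dimensional, `√2·Υ` is even unimodular with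
minimum norm 4, and `M, N` is a polarization of `Υ` by two copies of the Leech lattice. -/
def LeechSetup (Υ M N : Submodule ℤ V) : Prop :=
  Module.finrank ℝ V = 24 ∧ IsLat Υ ∧ SqrtTwoEvenUnimod Υ ∧
  (∀ v ∈ Υ, v ≠ 0 → 4 ≤ 2 * ⟪v, v⟫) ∧
  IsPolarization Υ M N ∧
  IsLat M ∧ IsEvenLat M ∧ IsUnimodularLat M ∧ minNorm M = 4 ∧
  IsLat N ∧ IsEvenLat N ∧ IsUnimodularLat N ∧ minNorm N = 4

/-- `(w,x,y,z) ∈ N × M × M × M` is admissible if `x + y + z ∈ M ∩ N`. -/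
def Admissible (M N : Submodule ℤ V) (w x y z : V) : Prop :=
  w ∈ N ∧ x ∈ M ∧ y ∈ M ∧ z ∈ M ∧ x + y + z ∈ M ⊓ N

/-- An offender is an admissible quadruple all three of whose associated vectors
`w+x, w+y, w+z` have norm 2. -/
def Offender (M N : Submodule ℤ V) (w x y z : V) : Prop :=
  Admissible M N w x y z ∧
  ⟪w + x, w + x⟫ = 2 ∧ ⟪w + y, w + y⟫ = 2 ∧ ⟪w + z, w + z⟫ = 2

/-- A super offender is an offender with `⟪w,w⟫ = 4` whose multiset of norms
`{⟪x,x⟫, ⟪y,y⟫, ⟪z,z⟫}` equals `{6,6,4}`. -/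
def SuperOffender (M N : Submodule ℤ V) (w x y z : V) : Prop :=
  Offender M N w x y z ∧ ⟪w, w⟫ = 4 ∧
  ({⟪x, x⟫, ⟪y, y⟫, ⟪z, z⟫} : Multiset ℝ) = ({6, 6, 4} : Multiset ℝ)

theorem minNorm_le_of_mem {W : Type*} [NormedAddCommGroup W] [InnerProductSpace ℝ W]
    (L : Submodule ℤ W) {x : W} (hx : x ∈ L) (h0 : x ≠ 0) : minNorm L ≤ ⟪x, x⟫ := by
  apply csInf_le
  · exact ⟨0, by rintro r ⟨y, _, _, rfl⟩; exact real_inner_self_nonneg⟩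
  · exact ⟨x, hx, h0, rfl⟩

theorem nonempty_of_minNorm {W : Type*} [NormedAddCommGroup W] [InnerProductSpace ℝ W]
    (L : Submodule ℤ W) (h : minNorm L ≠ 0) :
    {r : ℝ | ∃ x ∈ L, x ≠ 0 ∧ ⟪x, x⟫ = r}.Nonempty := by
  by_contra hne
  rw [Set.not_nonempty_iff_eq_empty] at hne
  apply h
  unfold minNorm
  rw [hne, Real.sInf_empty]

theorem inner_self_fin3 (v : PiLp 2 fun _ : Fin 3 => V) :
    ⟪v, v⟫ = ⟪v 0, v 0⟫ + ⟪v 1, v 1⟫ + ⟪v 2, v 2⟫ := by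
  rw [PiLp.inner_apply, Fin.sum_univ_three]

theorem mem_LMN3 {M N : Submodule ℤ V} {v : PiLp 2 fun _ : Fin 3 => V} (hv : v ∈ LMN M N 3) :
    ∃ w ∈ N, ∃ x ∈ M, ∃ y ∈ M, ∃ z ∈ M, x + y + z ∈ M ⊓ N ∧
      v 0 = w + x ∧ v 1 = w + y ∧ v 2 = w + z := by
  obtain ⟨a, ha, b, ⟨w, hw, hb⟩, rfl⟩ := Submodule.mem_sup.1 hv
  have h2 := ha.2
  rw [Fin.sum_univ_three] at h2
  refine ⟨w, hw, a 0, ha.1 0, a 1, ha.1 1, a 2, ha.1 2, h2, ?_, ?_, ?_⟩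
  · rw [← hb 0, add_comm]; rfl
  · rw [← hb 1, add_comm]; rfl
  · rw [← hb 2, add_comm]; rfl

/-- If the first coordinate vanishes, the rest has norm at least 6. -/
theorem zero_case {Υ M N : Submodule ℤ V}
    (hΥ4 : ∀ v ∈ Υ, v ≠ 0 → 4 ≤ 2 * ⟪v, v⟫) (hpol : IsPolarization Υ M N)
    (hM4 : ∀ v ∈ M, v ≠ 0 → 4 ≤ ⟪v, v⟫) {w x y z : V} (hw : w ∈ N) (hx : x ∈ M)
    (hy : y ∈ M) (hz : z ∈ M) (hs : x + y + z ∈ M ⊓ N) (h0 : w + x = 0)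
    (hne : w + y ≠ 0 ∨ w + z ≠ 0) :
    6 ≤ ⟪w + y, w + y⟫ + ⟪w + z, w + z⟫ := by
  obtain ⟨-, -, -, -, -, hinf⟩ := hpol
  have hwM : w ∈ M := by
    have : w = -x := eq_neg_of_add_eq_zero_left h0
    rw [this]; exact M.neg_mem hx
  have hsum : (w + y) + (w + z) ∈ M ⊓ N := by
    have h3 : (3 : ℤ) • w ∈ M ⊓ N := (M ⊓ N).smul_mem 3 ⟨hwM, hw⟩
    have e : (w + y) + (w + z) = (3 : ℤ) • w + (x + y + z) - (w + x) := by module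
    rw [e, h0, sub_zero]
    exact (M ⊓ N).add_mem h3 hs
  have big : ∀ u ∈ M ⊓ N, u ≠ 0 → 8 ≤ ⟪u, u⟫ := by
    intro u hu hu0
    rw [hinf] at hu
    obtain ⟨t, ht, rfl⟩ := (Submodule.mem_smul_pointwise_iff_exists _ _ _).1 hu
    have ht0 : t ≠ 0 := by rintro rfl; simp at hu0
    have := hΥ4 t ht ht0
    have e : (2 : ℤ) • t = t + t := by module
    rw [e, inner_add_left, inner_add_right]
    linarith
  by_cases hy0 : w + y = 0
  · have hz0 : w + z ≠ 0 := by tauto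
    rw [hy0, zero_add] at hsum
    have := big _ hsum hz0
    rw [hy0, inner_zero_left]; linarith
  · by_cases hz0 : w + z = 0
    · rw [hz0, add_zero] at hsum
      have := big _ hsum hy0
      rw [hz0, inner_zero_left]; linarith
    · have h1 := hM4 _ (M.add_mem hwM hy) hy0
      have h2 := hM4 _ (M.add_mem hwM hz) hz0
      linarith

theorem part_three {Υ M N : Submodule ℤ V}
    (hΥ4 : ∀ v ∈ Υ, v ≠ 0 → 4 ≤ 2 * ⟪v, v⟫) (hpol : IsPolarization Υ M N)
    (h4 : minNorm M = 4) : 6 ≤ minNorm (LMN M N 3) := by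
  have hM4 : ∀ v ∈ M, v ≠ 0 → 4 ≤ ⟪v, v⟫ := fun v hv h0 => h4 ▸ minNorm_le_of_mem M hv h0
  obtain ⟨r, m, hm, hm0, -⟩ := nonempty_of_minNorm M (by rw [h4]; norm_num)
  unfold minNorm
  apply le_csInf
  · let u : PiLp 2 fun _ : Fin 3 => V := WithLp.toLp 2 ![m, -m, 0]
    refine ⟨_, u, ?_, ?_, rfl⟩
    · apply Submodule.mem_sup_left
      constructor
      · intro i
        fin_cases i
        · exact hm
        · exact M.neg_mem hm
        · exact M.zero_mem
      · have e : ∑ i, u i = 0 := by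
          rw [Fin.sum_univ_three]
          simp [u]
        rw [e]; exact (M ⊓ N).zero_mem
    · intro hu
      exact hm0 (congrArg (fun v : PiLp 2 fun _ : Fin 3 => V => v 0) hu)
  · rintro r ⟨v, hv, hv0, rfl⟩
    obtain ⟨w, hw, x, hx, y, hy, z, hz, hs, e0, e1, e2⟩ := mem_LMN3 hv
    have hne : ¬ (w + x = 0 ∧ w + y = 0 ∧ w + z = 0) := by
      rintro ⟨a, b, c⟩
      apply hv0
      ext i
      fin_cases i
      · exact e0.trans a
      · exact e1.trans b
      · exact e2.trans c
    rw [inner_self_fin3, e0, e1, e2]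
    by_cases hx0 : w + x = 0
    · have := zero_case hΥ4 hpol hM4 hw hx hy hz hs hx0 (by tauto)
      rw [hx0, inner_zero_left]; linarith
    by_cases hy0 : w + y = 0
    · have := zero_case hΥ4 hpol hM4 hw hy hx hz (by rwa [add_comm y x]) hy0 (by tauto)
      rw [hy0, inner_zero_left]; linarith
    by_cases hz0 : w + z = 0
    · have := zero_case hΥ4 hpol hM4 hw hz hx hy
        (by rwa [add_assoc, add_comm z (x + y)]) hz0 (by tauto)
      rw [hz0, inner_zero_left]; linarith
    have a := hΥ4 _ (Υ.add_mem (hpol.2.1 hw) (hpol.1 hx)) hx0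
    have b := hΥ4 _ (Υ.add_mem (hpol.2.1 hw) (hpol.1 hy)) hy0
    have c := hΥ4 _ (Υ.add_mem (hpol.2.1 hw) (hpol.1 hz)) hz0
    linarith

/-- for a polarization of `Υ` by Niemeier lattices `M, N`:
(iii) if `√2·Υ` has minimum norm 4 and `μ(M) = 4` then `μ(L(M,N,3)) ≥ 6`;
(iv) if in addition `μ(N) = 2` then `μ(L(M,N,3)) = 6`. -/
theorem statement9 [FiniteDimensional ℝ V] (hdim : finrank ℝ V = 24)
    (Υ M N : Submodule ℤ V) (hΥlat : IsLat Υ) (hΥ : SqrtTwoEvenUnimod Υ)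
    (hΥ4 : ∀ v ∈ Υ, v ≠ 0 → 4 ≤ 2 * ⟪v, v⟫)
    (hpol : IsPolarization Υ M N)
    (hM : IsLat M ∧ IsEvenLat M ∧ IsUnimodularLat M)
    (hN : IsLat N ∧ IsEvenLat N ∧ IsUnimodularLat N) :
    (minNorm M = 4 → 6 ≤ minNorm (LMN M N 3)) ∧
    (minNorm M = 4 → minNorm N = 2 → minNorm (LMN M N 3) = 6) := by
  refine ⟨part_three hΥ4 hpol, fun h4 h2 => le_antisymm ?_ (part_three hΥ4 hpol h4)⟩
  obtain ⟨r, ⟨w, hw, hw0, rfl⟩, hlt⟩ :=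
    exists_lt_of_csInf_lt (nonempty_of_minNorm N (by rw [h2]; norm_num))
      (show minNorm N < 3 by rw [h2]; norm_num)
  obtain ⟨n, hn⟩ := hN.2.1.2 w hw
  have hw2 : ⟪w, w⟫ ≤ 2 := by
    rw [hn] at hlt ⊢
    have : (n : ℝ) < 2 := by linarith
    have : n < 2 := by exact_mod_cast this
    have : (n : ℝ) ≤ 1 := by exact_mod_cast (by omega : n ≤ 1)
    linarith
  let u : PiLp 2 fun _ : Fin 3 => V := WithLp.toLp 2 fun _ => w
  have hu : u ∈ LMN M N 3 := Submodule.mem_sup_right ⟨w, hw, fun _ => rfl⟩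
  have hu0 : u ≠ 0 := fun h =>
    hw0 (congrArg (fun v : PiLp 2 fun _ : Fin 3 => V => v 0) h)
  have := minNorm_le_of_mem _ hu hu0
  rw [inner_self_fin3] at this
  have e : ∀ i, u i = w := fun _ => rfl
  simp only [e] at this
  linarith
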